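/- Let A ∈ ℂ^{n×n} be Hermitian positive definite with smallest eigenvalue λ_min and largest eigenvalue λ_max, let b ∈ ℂ^n with ‖b‖ = 1, let g be a Stieltjes function and set f(z) := z·g(z), and let m ≥ 1. Let V_m ∈ ℂ^{n×m} have orthonormal columns whose column space equals K_m(A,b), and let f_m := V_m f(V_m* A V_m) V_m* b be the Lanczos approximation. Then for every x ∈ K_m(A,b), ‖f(A)b − f_m‖ ≤ (1 + κ(A)²) ‖f(A)b − x‖, where κ(A) = λ_max/λ_min. -/

import Mathlib

open MeasureTheory Matrix ComplexOrder

/-- A Stieltjes function: `f z = ∫ 1/(z+t) dμ(t)` for `z > 0`, for a positive Borel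
measure `μ` on `[0,∞)` with `∫ 1/(1+t) dμ(t) < ∞`. -/
def IsStieltjes (f : ℝ → ℝ) : Prop :=
  ∃ μ : Measure ℝ,
    MeasureTheory.IntegrableOn (fun t => (1 + t)⁻¹) (Set.Ici 0) μ ∧
    ∀ z : ℝ, 0 < z → f z = ∫ t in Set.Ici (0 : ℝ), (z + t)⁻¹ ∂μ

/-- The Krylov subspace `K_m(A,b) = span{b, Ab, …, A^{m-1} b}`. -/
noncomputable def Krylov {n : ℕ} (A : Matrix (Fin n) (Fin n) ℂ)
    (b : EuclideanSpace ℂ (Fin n)) (m : ℕ) : Submodule ℂ (EuclideanSpace ℂ (Fin n)) :=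
  Submodule.span ℂ {v | ∃ i < m, v = Matrix.toEuclideanLin (A ^ i) b}

open Polynomial in
/-- The Lagrange interpolation error of `z ↦ z / (z + t)`. -/
lemma sub_eval_interpolate_mul_inv_add {s : Finset ℝ} (hs : s.Nonempty) {t z : ℝ}
    (hst : ∀ θ ∈ s, θ + t ≠ 0) (hz : z + t ≠ 0) :
    z * (z + t)⁻¹ - (Lagrange.interpolate s id fun θ => θ * (θ + t)⁻¹).eval z =
      -(-1) ^ s.card * (t * (∏ θ ∈ s, (θ + t))⁻¹ * (z + t)⁻¹) * (Lagrange.nodal s id).eval z := by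
  set P := Lagrange.interpolate s id fun θ => θ * (θ + t)⁻¹ with hP
  set c : ℝ := (-1) ^ s.card * (∏ θ ∈ s, (θ + t))⁻¹ with hc
  have hprod : ∏ θ ∈ s, (θ + t) ≠ 0 := Finset.prod_ne_zero_iff.mpr hst
  have hnodal : c * (Lagrange.nodal s id).eval (-t) = 1 := by
    have : (Lagrange.nodal s id).eval (-t) = (-1) ^ s.card * ∏ θ ∈ s, (θ + t) := by
      rw [Lagrange.eval_nodal, ← Finset.prod_const, ← Finset.prod_mul_distrib]
      exact Finset.prod_congr rfl fun θ _ => by simp; ring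
    rw [this, hc]
    have h1 : ((-1 : ℝ) ^ s.card) * (-1) ^ s.card = 1 := by
      rw [← mul_pow]; simp
    field_simp
    linear_combination h1
  have hts : -t ∉ s := fun h => hst _ h (by ring)
  have hcard : 1 ≤ s.card := hs.card_pos
  have hdP : P.natDegree + 1 ≤ s.card := by
    by_cases h0 : P = 0
    · simpa [h0] using hcard
    · have := Lagrange.degree_interpolate_lt (s := s) (v := id)
        (fun θ : ℝ => θ * (θ + t)⁻¹) (Set.injOn_id _)
      rw [← hP] at this
      exact (natDegree_lt_iff_degree_lt h0).2 this
  have hzero : (X + C t) * P - X - C (t * c) * Lagrange.nodal s id = 0 := by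
    refine eq_zero_of_degree_lt_of_eval_finset_eq_zero (insert (-t) s) ?_ ?_
    · rw [Finset.card_insert_of_notMem hts]
      refine lt_of_le_of_lt degree_le_natDegree ?_
      refine Nat.cast_lt.2 (Nat.lt_succ_of_le ?_)
      refine (natDegree_sub_le_of_le (natDegree_sub_le_of_le natDegree_mul_le natDegree_X_le)
        natDegree_mul_le).trans ?_
      simp only [natDegree_X_add_C, natDegree_C, Lagrange.natDegree_nodal]
      omega
    · intro y hy
      rcases Finset.mem_insert.1 hy with rfl | hy
      · simp only [eval_sub, eval_mul, eval_add, eval_X, eval_C]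
        linear_combination -t * hnodal
      · have h1 : P.eval y = y * (y + t)⁻¹ :=
          Lagrange.eval_interpolate_at_node (v := id) _ (Set.injOn_id _) hy
        have h2 : (Lagrange.nodal s id).eval y = 0 := Lagrange.eval_nodal_at_node (v := id) hy
        have := hst y hy
        simp only [eval_sub, eval_mul, eval_add, eval_X, eval_C, h1, h2]
        field_simp
        ring
  have h := congrArg (eval z) hzero
  simp only [eval_sub, eval_mul, eval_add, eval_X, eval_C, eval_zero] at h
  have key : z - (z + t) * P.eval z = -(t * c) * (Lagrange.nodal s id).eval z := by
    linear_combination -h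
  calc z * (z + t)⁻¹ - P.eval z = (z - (z + t) * P.eval z) * (z + t)⁻¹ := by
        field_simp
    _ = _ := by rw [key, hc]; ring

lemma inv_add_le_mul_inv_one_add {z t : ℝ} (hz : 0 < z) (ht : 0 ≤ t) :
    (z + t)⁻¹ ≤ (1 + z⁻¹) * (1 + t)⁻¹ := by
  rw [inv_le_iff_one_le_mul₀ (by positivity)]
  have h1 : 0 < 1 + t := by positivity
  have : (1 + z⁻¹) * (1 + t)⁻¹ * (z + t) = 1 + (z + t * z⁻¹) * (1 + t)⁻¹ := by
    field_simp
    ring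
  rw [this]
  have : 0 ≤ (z + t * z⁻¹) * (1 + t)⁻¹ := by positivity
  linarith

lemma integrableOn_inv_add {μ : Measure ℝ}
    (hμ : IntegrableOn (fun t => (1 + t)⁻¹) (Set.Ici 0) μ) {z : ℝ} (hz : 0 < z) :
    IntegrableOn (fun t => (z + t)⁻¹) (Set.Ici 0) μ := by
  refine (hμ.const_mul (1 + z⁻¹)).mono' (by fun_prop) ?_
  filter_upwards [ae_restrict_mem measurableSet_Ici] with t ht
  have ht : 0 ≤ t := ht
  rw [Real.norm_of_nonneg (by positivity)]
  exact inv_add_le_mul_inv_one_add hz ht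

/-- The density of the interpolation error of `z ↦ z * ∫ (z + t)⁻¹ ∂μ` with respect to `μ`. -/
noncomputable def interpErrorKernel (s : Finset ℝ) (z t : ℝ) : ℝ :=
  t * (∏ θ ∈ s, (θ + t))⁻¹ * (z + t)⁻¹

lemma interpErrorKernel_nonneg {s : Finset ℝ} (hs : ∀ θ ∈ s, 0 < θ) {z t : ℝ} (hz : 0 < z)
    (ht : 0 ≤ t) : 0 ≤ interpErrorKernel s z t := by
  have : 0 ≤ ∏ θ ∈ s, (θ + t) := Finset.prod_nonneg fun θ h => by
    have := hs θ h
    positivity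
  unfold interpErrorKernel
  positivity

lemma integrableOn_interpErrorKernel {μ : Measure ℝ}
    (hμ : IntegrableOn (fun t => (1 + t)⁻¹) (Set.Ici 0) μ) {s : Finset ℝ} (hne : s.Nonempty)
    (hs : ∀ θ ∈ s, 0 < θ) {z : ℝ} (hz : 0 < z) :
    IntegrableOn (interpErrorKernel s z) (Set.Ici 0) μ := by
  obtain ⟨θ₀, hθ₀⟩ := hne
  have hm : Measurable (interpErrorKernel s z) := by
    unfold interpErrorKernel
    fun_prop
  refine ((integrableOn_inv_add hμ hz).const_mul (∏ θ ∈ s.erase θ₀, θ)⁻¹).mono'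
    hm.aestronglyMeasurable ?_
  filter_upwards [ae_restrict_mem measurableSet_Ici] with t ht
  have ht : 0 ≤ t := ht
  rw [Real.norm_of_nonneg (interpErrorKernel_nonneg hs hz ht), interpErrorKernel]
  refine mul_le_mul_of_nonneg_right ?_ (by positivity)
  have hpos : 0 < ∏ θ ∈ s.erase θ₀, θ :=
    Finset.prod_pos fun θ h => hs θ (Finset.mem_of_mem_erase h)
  have hle : ∏ θ ∈ s.erase θ₀, θ ≤ ∏ θ ∈ s.erase θ₀, (θ + t) :=
    Finset.prod_le_prod (fun θ h => (hs θ (Finset.mem_of_mem_erase h)).le)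
      fun θ _ => by linarith
  have h0 := hs θ₀ hθ₀
  rw [← Finset.mul_prod_erase s _ hθ₀, mul_inv, ← mul_assoc]
  have h1 : t * (θ₀ + t)⁻¹ ≤ 1 := by
    rw [← div_eq_mul_inv, div_le_one (by positivity)]
    linarith
  calc t * (θ₀ + t)⁻¹ * (∏ θ ∈ s.erase θ₀, (θ + t))⁻¹
      ≤ 1 * (∏ θ ∈ s.erase θ₀, θ)⁻¹ :=
        mul_le_mul h1 (inv_anti₀ hpos hle) (inv_nonneg.2 (hpos.le.trans hle)) zero_le_one
    _ = _ := one_mul _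

/-- The Lagrange interpolation error of `z ↦ z * g z`, for `g` the Stieltjes transform of `μ`. -/
lemma stieltjes_sub_eval_interpolate {μ : Measure ℝ}
    (hμ : IntegrableOn (fun t => (1 + t)⁻¹) (Set.Ici 0) μ) {g f : ℝ → ℝ}
    (hg : ∀ z : ℝ, 0 < z → g z = ∫ t in Set.Ici (0 : ℝ), (z + t)⁻¹ ∂μ)
    (hf : ∀ z : ℝ, f z = z * g z) {s : Finset ℝ} (hne : s.Nonempty)
    (hs : ∀ θ ∈ s, 0 < θ) {z : ℝ} (hz : 0 < z) :
    f z - (Lagrange.interpolate s id f).eval z =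
      -(-1) ^ s.card * (∫ t in Set.Ici (0 : ℝ), interpErrorKernel s z t ∂μ) *
        (Lagrange.nodal s id).eval z := by
  have hint : ∀ y : ℝ, 0 < y → f y = ∫ t in Set.Ici (0 : ℝ), y * (y + t)⁻¹ ∂μ := fun y hy => by
    rw [hf, hg y hy, integral_const_mul]
  have hinterp : (Lagrange.interpolate s id f).eval z =
      ∫ t in Set.Ici (0 : ℝ), (Lagrange.interpolate s id fun θ => θ * (θ + t)⁻¹).eval z ∂μ := by
    simp only [Lagrange.interpolate_apply, Polynomial.eval_finsetSum, Polynomial.eval_mul,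
      Polynomial.eval_C]
    rw [integral_finsetSum]
    · refine Finset.sum_congr rfl fun θ hθ => ?_
      rw [hint θ (hs θ hθ), integral_mul_const]
    · exact fun θ hθ => ((integrableOn_inv_add hμ (hs θ hθ)).const_mul θ).mul_const _
  have hinti : IntegrableOn
      (fun t => (Lagrange.interpolate s id fun θ => θ * (θ + t)⁻¹).eval z) (Set.Ici 0) μ := by
    simp only [Lagrange.interpolate_apply, Polynomial.eval_finsetSum, Polynomial.eval_mul,
      Polynomial.eval_C]
    exact integrable_finsetSum _ fun θ hθ =>
      ((integrableOn_inv_add hμ (hs θ hθ)).const_mul θ).mul_const _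
  rw [hint z hz, hinterp, ← integral_sub ((integrableOn_inv_add hμ hz).const_mul z) hinti,
    ← integral_const_mul, ← integral_mul_const]
  refine setIntegral_congr_fun measurableSet_Ici fun t ht => ?_
  have ht : 0 ≤ t := ht
  exact sub_eval_interpolate_mul_inv_add hne
    (fun θ hθ => (add_pos_of_pos_of_nonneg (hs θ hθ) ht).ne')
    (add_pos_of_pos_of_nonneg hz ht).ne'

lemma integral_interpErrorKernel_anti {μ : Measure ℝ}
    (hμ : IntegrableOn (fun t => (1 + t)⁻¹) (Set.Ici 0) μ) {s : Finset ℝ} (hne : s.Nonempty)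
    (hs : ∀ θ ∈ s, 0 < θ) {y z : ℝ} (hy : 0 < y) (hyz : y ≤ z) :
    ∫ t in Set.Ici (0 : ℝ), interpErrorKernel s z t ∂μ ≤
      ∫ t in Set.Ici (0 : ℝ), interpErrorKernel s y t ∂μ := by
  have hz := hy.trans_le hyz
  refine setIntegral_mono_on (integrableOn_interpErrorKernel hμ hne hs hz)
    (integrableOn_interpErrorKernel hμ hne hs hy) measurableSet_Ici fun t ht => ?_
  have ht : 0 ≤ t := ht
  have : 0 ≤ ∏ θ ∈ s, (θ + t) := Finset.prod_nonneg fun θ h => by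
    have := hs θ h
    positivity
  unfold interpErrorKernel
  gcongr

lemma mul_integral_interpErrorKernel_le {μ : Measure ℝ}
    (hμ : IntegrableOn (fun t => (1 + t)⁻¹) (Set.Ici 0) μ) {s : Finset ℝ} (hne : s.Nonempty)
    (hs : ∀ θ ∈ s, 0 < θ) {y z : ℝ} (hy : 0 < y) (hyz : y ≤ z) :
    y * ∫ t in Set.Ici (0 : ℝ), interpErrorKernel s y t ∂μ ≤
      z * ∫ t in Set.Ici (0 : ℝ), interpErrorKernel s z t ∂μ := by
  have hz := hy.trans_le hyz
  rw [← integral_const_mul, ← integral_const_mul]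
  refine setIntegral_mono_on ((integrableOn_interpErrorKernel hμ hne hs hy).const_mul y)
    ((integrableOn_interpErrorKernel hμ hne hs hz).const_mul z) measurableSet_Ici fun t ht => ?_
  have ht : 0 ≤ t := ht
  have : 0 ≤ ∏ θ ∈ s, (θ + t) := Finset.prod_nonneg fun θ h => by
    have := hs θ h
    positivity
  have hle : y * (y + t)⁻¹ ≤ z * (z + t)⁻¹ := by
    rw [← div_eq_mul_inv, ← div_eq_mul_inv, div_le_div_iff₀ (by positivity) (by positivity)]
    nlinarith
  unfold interpErrorKernel
  calc y * (t * (∏ θ ∈ s, (θ + t))⁻¹ * (y + t)⁻¹)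
      = t * (∏ θ ∈ s, (θ + t))⁻¹ * (y * (y + t)⁻¹) := by ring
    _ ≤ t * (∏ θ ∈ s, (θ + t))⁻¹ * (z * (z + t)⁻¹) := by gcongr
    _ = _ := by ring

lemma Matrix.IsHermitian.cfc_polynomial_eval {n : Type*} [Fintype n] [DecidableEq n]
    {A : Matrix n n ℂ} (hA : A.IsHermitian) (p : Polynomial ℝ) :
    hA.cfc p.eval = Polynomial.aeval A p := by
  rw [← hA.cfc_eq]
  exact cfc_polynomial p A hA

lemma Matrix.IsHermitian.cfc_congr_eigenvalues {n : Type*} [Fintype n] [DecidableEq n]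
    {A : Matrix n n ℂ} (hA : A.IsHermitian) {f g : ℝ → ℝ}
    (h : ∀ i, f (hA.eigenvalues i) = g (hA.eigenvalues i)) : hA.cfc f = hA.cfc g := by
  have : f ∘ hA.eigenvalues = g ∘ hA.eigenvalues := funext h
  rw [Matrix.IsHermitian.cfc, Matrix.IsHermitian.cfc, this]

/-- In an eigenvector basis, the functional calculus acts diagonally. -/
lemma Matrix.IsHermitian.eigenvectorBasis_repr_cfc {n : Type*} [Fintype n] [DecidableEq n]
    {A : Matrix n n ℂ} (hA : A.IsHermitian) (f : ℝ → ℝ) (v : EuclideanSpace ℂ n) (i : n) :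
    hA.eigenvectorBasis.repr (Matrix.toEuclideanLin (hA.cfc f) v) i =
      f (hA.eigenvalues i) * hA.eigenvectorBasis.repr v i := by
  have hrepr : ∀ u : EuclideanSpace ℂ n, hA.eigenvectorBasis.repr u i =
      ((star (hA.eigenvectorUnitary : Matrix n n ℂ)) *ᵥ u.ofLp) i := fun u => by
    rw [OrthonormalBasis.repr_apply_apply]
    simp [Matrix.mulVec, dotProduct, PiLp.inner_apply, Matrix.star_apply, mul_comm]
  rw [hrepr, hrepr, Matrix.IsHermitian.cfc, Unitary.conjStarAlgAut_apply]
  rw [Matrix.toLpLin_apply, Matrix.mulVec_mulVec, ← mul_assoc, ← mul_assoc]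
  rw [Unitary.coe_star_mul_self, one_mul, ← Matrix.mulVec_mulVec, Matrix.mulVec_diagonal]
  simp

lemma Matrix.IsHermitian.norm_cfc_apply_le {n : Type*} [Fintype n] [DecidableEq n]
    {A : Matrix n n ℂ} (hA : A.IsHermitian) {f : ℝ → ℝ} {c : ℝ} (hc : 0 ≤ c)
    (hf : ∀ i, |f (hA.eigenvalues i)| ≤ c) (v : EuclideanSpace ℂ n) :
    ‖Matrix.toEuclideanLin (hA.cfc f) v‖ ≤ c * ‖v‖ := by
  rw [← hA.eigenvectorBasis.repr.norm_map, ← hA.eigenvectorBasis.repr.norm_map v,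
    ← abs_of_nonneg (norm_nonneg _), ← abs_of_nonneg (mul_nonneg hc (norm_nonneg _)), ← sq_le_sq,
    mul_pow, EuclideanSpace.norm_sq_eq, EuclideanSpace.norm_sq_eq, Finset.mul_sum]
  refine Finset.sum_le_sum fun i _ => ?_
  rw [hA.eigenvectorBasis_repr_cfc, norm_mul, mul_pow, Complex.norm_real, Real.norm_eq_abs]
  gcongr
  exact hf i

lemma Matrix.IsHermitian.le_re_inner_cfc_apply {n : Type*} [Fintype n] [DecidableEq n]
    {A : Matrix n n ℂ} (hA : A.IsHermitian) {f : ℝ → ℝ} {c : ℝ}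
    (hf : ∀ i, c ≤ f (hA.eigenvalues i)) (v : EuclideanSpace ℂ n) :
    c * ‖v‖ ^ 2 ≤ (inner ℂ v (Matrix.toEuclideanLin (hA.cfc f) v)).re := by
  rw [← hA.eigenvectorBasis.repr.norm_map v, ← hA.eigenvectorBasis.repr.inner_map_map,
    EuclideanSpace.norm_sq_eq, Finset.mul_sum, PiLp.inner_apply, Complex.re_sum]
  refine Finset.sum_le_sum fun i _ => ?_
  rw [hA.eigenvectorBasis_repr_cfc, ← smul_eq_mul (_ : ℂ), inner_smul_right, Complex.re_ofReal_mul]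
  refine (mul_le_mul_of_nonneg_right (hf i) (sq_nonneg _)).trans_eq ?_
  exact congrArg _ (inner_self_eq_norm_sq (𝕜 := ℂ) _).symm

section Lanczos

variable {n m : ℕ} {A : Matrix (Fin n) (Fin n) ℂ} {b : EuclideanSpace ℂ (Fin n)}
  {V : Matrix (Fin n) (Fin m) ℂ}

lemma toEuclideanLin_mul_conjTranspose_of_mem_range (hVorth : Vᴴ * V = 1)
    {v : EuclideanSpace ℂ (Fin n)} (hv : v ∈ LinearMap.range (Matrix.toEuclideanLin V)) :
    Matrix.toEuclideanLin (V * Vᴴ) v = v := by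
  obtain ⟨u, rfl⟩ := hv
  rw [← LinearMap.comp_apply, ← Matrix.toLpLin_mul, Matrix.mul_assoc, hVorth, Matrix.mul_one]

/-- The Lanczos approximation is exact on monomials of degree less than `m`. -/
lemma lanczos_pow_exact (hVorth : Vᴴ * V = 1)
    (hVspan : LinearMap.range (Matrix.toEuclideanLin V) = Krylov A b m) {j : ℕ} (hj : j < m) :
    Matrix.toEuclideanLin (V * (Vᴴ * A * V) ^ j * Vᴴ) b = Matrix.toEuclideanLin (A ^ j) b := by
  have hproj : ∀ i < m, Matrix.toEuclideanLin (V * Vᴴ) (Matrix.toEuclideanLin (A ^ i) b) =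
      Matrix.toEuclideanLin (A ^ i) b := fun i hi =>
    toEuclideanLin_mul_conjTranspose_of_mem_range hVorth
      (hVspan ▸ Submodule.subset_span ⟨i, hi, rfl⟩)
  induction j with
  | zero => simpa using hproj 0 hj
  | succ j ih =>
    have h1 : V * (Vᴴ * A * V) ^ (j + 1) * Vᴴ = V * Vᴴ * (A * (V * (Vᴴ * A * V) ^ j * Vᴴ)) := by
      rw [pow_succ']
      simp only [Matrix.mul_assoc]
    have h2 : Matrix.toEuclideanLin (A * (V * (Vᴴ * A * V) ^ j * Vᴴ)) b =
        Matrix.toEuclideanLin (A ^ (j + 1)) b := by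
      rw [Matrix.toLpLin_mul_same, LinearMap.comp_apply, ih (by omega), pow_succ',
        Matrix.toLpLin_mul_same, LinearMap.comp_apply]
    rw [h1, Matrix.toLpLin_mul_same, LinearMap.comp_apply, h2, hproj _ hj]

lemma conjTranspose_pow_apply (hVorth : Vᴴ * V = 1)
    (hVspan : LinearMap.range (Matrix.toEuclideanLin V) = Krylov A b m) {j : ℕ} (hj : j ≤ m) :
    Matrix.toEuclideanLin (Vᴴ * A ^ j) b =
      Matrix.toEuclideanLin ((Vᴴ * A * V) ^ j * Vᴴ) b := by
  cases j with
  | zero => simp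
  | succ j =>
    rw [pow_succ', ← Matrix.mul_assoc, Matrix.toLpLin_mul_same, LinearMap.comp_apply,
      ← lanczos_pow_exact hVorth hVspan (by omega), ← LinearMap.comp_apply,
      ← Matrix.toLpLin_mul_same, pow_succ']
    simp only [Matrix.mul_assoc]

/-- The Lanczos approximation is exact on polynomials of degree less than `m`. -/
lemma lanczos_polynomial_exact (hVorth : Vᴴ * V = 1)
    (hVspan : LinearMap.range (Matrix.toEuclideanLin V) = Krylov A b m) {p : Polynomial ℝ}
    (hp : p.degree < m) :
    Matrix.toEuclideanLin (V * Polynomial.aeval (Vᴴ * A * V) p * Vᴴ) b =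
      Matrix.toEuclideanLin (Polynomial.aeval A p) b := by
  rw [Polynomial.aeval_eq_sum_range, Polynomial.aeval_eq_sum_range, Matrix.mul_sum,
    Matrix.sum_mul, map_sum, map_sum, LinearMap.sum_apply, LinearMap.sum_apply]
  refine Finset.sum_congr rfl fun j hj => ?_
  by_cases hc : p.coeff j = 0
  · simp [hc]
  have hjm : j < m := by
    exact_mod_cast (Polynomial.le_degree_of_ne_zero hc).trans_lt hp
  have := lanczos_pow_exact hVorth hVspan hjm
  simp only [Matrix.mul_smul, Matrix.smul_mul, ← Complex.coe_smul, map_smul,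
    LinearMap.smul_apply, this]

lemma conjTranspose_polynomial_apply (hVorth : Vᴴ * V = 1)
    (hVspan : LinearMap.range (Matrix.toEuclideanLin V) = Krylov A b m) {p : Polynomial ℝ}
    (hp : p.degree ≤ m) :
    Matrix.toEuclideanLin (Vᴴ * Polynomial.aeval A p) b =
      Matrix.toEuclideanLin (Polynomial.aeval (Vᴴ * A * V) p * Vᴴ) b := by
  rw [Polynomial.aeval_eq_sum_range, Polynomial.aeval_eq_sum_range, Matrix.mul_sum,
    Matrix.sum_mul, map_sum, map_sum, LinearMap.sum_apply, LinearMap.sum_apply]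
  refine Finset.sum_congr rfl fun j hj => ?_
  by_cases hc : p.coeff j = 0
  · simp [hc]
  have hjm : j ≤ m := by
    exact_mod_cast (Polynomial.le_degree_of_ne_zero hc).trans hp
  have := conjTranspose_pow_apply hVorth hVspan hjm
  simp only [Matrix.mul_smul, Matrix.smul_mul, ← Complex.coe_smul, map_smul,
    LinearMap.smul_apply, this]

end Lanczos

/-- Quasi-optimality of an error `e` that is close to the direction of a vector `w` orthogonal to
the perturbation `k`. -/
lemma norm_le_mul_norm_add_of_inner_eq_zero {E : Type*} [NormedAddCommGroup E]
    [InnerProductSpace ℂ E] {w e k : E} {α β κ : ℝ} (hκ : 0 ≤ κ) (hβ : β ≤ κ * α)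
    (hk : inner ℂ w k = 0) (hα : α * ‖w‖ ^ 2 ≤ ‖inner ℂ w e‖) (he : ‖e‖ ≤ β * ‖w‖) :
    ‖e‖ ≤ κ * ‖e + k‖ := by
  rcases (norm_nonneg w).eq_or_lt with hw | hw
  · rw [← hw, mul_zero] at he
    exact he.trans (by positivity)
  · have h1 : α * ‖w‖ ≤ ‖e + k‖ := by
      refine le_of_mul_le_mul_left ?_ hw
      have := norm_inner_le_norm (𝕜 := ℂ) w (e + k)
      rw [inner_add_right, hk, add_zero] at this
      linarith
    calc ‖e‖ ≤ κ * α * ‖w‖ := he.trans (by gcongr)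
      _ = κ * (α * ‖w‖) := by ring
      _ ≤ _ := by gcongr

/-- **Near instance optimality of Lanczos for `z` times Stieltjes functions** (Theorem 4.1 with bound (3.2))
(Theorem 3.1, bound (3.2)): if `A` is Hermitian positive definite, `‖b‖ = 1`, `f(z) = z·g(z)`
with `g` a Stieltjes function and `V` has orthonormal columns spanning `K_m(A,b)`, then the Lanczos
approximation `f_m = V f(V* A V) V* b` satisfies
`‖f(A)b − f_m‖ ≤ (1 + κ(A)²) ‖f(A)b − x‖` for every `x ∈ K_m(A,b)`. -/
theorem lanczos_near_instance_optimality_zStieltjes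
    {n m : ℕ} (hm : 1 ≤ m)
    (A : Matrix (Fin n) (Fin n) ℂ) (hA : A.IsHermitian) (hApd : A.PosDef)
    (lmin lmax : ℝ)
    (hlmin_mem : ∃ i, hA.eigenvalues i = lmin) (hlmin : ∀ i, lmin ≤ hA.eigenvalues i)
    (hlmax_mem : ∃ i, hA.eigenvalues i = lmax) (hlmax : ∀ i, hA.eigenvalues i ≤ lmax)
    (b : EuclideanSpace ℂ (Fin n)) (hb : ‖b‖ = 1)
    (g : ℝ → ℝ) (hg : IsStieltjes g) (f : ℝ → ℝ) (hf : ∀ z : ℝ, f z = z * g z)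
    (V : Matrix (Fin n) (Fin m) ℂ)
    (hVorth : Vᴴ * V = 1)
    (hVspan : LinearMap.range (Matrix.toEuclideanLin V) = Krylov A b m)
    (fm : EuclideanSpace ℂ (Fin n))
    (hfm : fm = Matrix.toEuclideanLin V
      (Matrix.toEuclideanLin ((Matrix.isHermitian_conjTranspose_mul_mul V hA).cfc f)
        (Matrix.toEuclideanLin Vᴴ b)))
    (x : EuclideanSpace ℂ (Fin n)) (hx : x ∈ Krylov A b m) :
    ‖Matrix.toEuclideanLin (hA.cfc f) b - fm‖ ≤
      (1 + (lmax / lmin) ^ 2) * ‖Matrix.toEuclideanLin (hA.cfc f) b - x‖ := by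
  obtain ⟨μ, hμ, hgμ⟩ := hg
  set T := Vᴴ * A * V with hTdef
  have hT : T.IsHermitian := Matrix.isHermitian_conjTranspose_mul_mul V hA
  have hVinj : Function.Injective V.mulVec := fun u v huv => by
    have := congrArg (Vᴴ.mulVec) huv
    simpa [Matrix.mulVec_mulVec, hVorth] using this
  have hTpd : T.PosDef := hApd.conjTranspose_mul_mul_same hVinj
  set s : Finset ℝ := Finset.univ.image hT.eigenvalues with hs_def
  have hmem : ∀ i, hT.eigenvalues i ∈ s := fun i => Finset.mem_image_of_mem _ (Finset.mem_univ i)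
  have hne : s.Nonempty := ⟨_, hmem ⟨0, hm⟩⟩
  have hs : ∀ θ ∈ s, 0 < θ := fun θ hθ => by
    obtain ⟨i, -, rfl⟩ := Finset.mem_image.1 hθ
    exact hTpd.eigenvalues_pos i
  have hcard : s.card ≤ m := by
    simpa using Finset.card_image_le (s := Finset.univ) (f := hT.eigenvalues)
  set p := Lagrange.interpolate s id f with hp
  have hpdeg : p.degree < m :=
    (Lagrange.degree_interpolate_lt f (Set.injOn_id _)).trans_le (by exact_mod_cast hcard)
  have hfmA : fm = Matrix.toEuclideanLin (hA.cfc p.eval) b := by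
    have hTp : hT.cfc f = Polynomial.aeval T p := by
      rw [← hT.cfc_polynomial_eval]
      exact hT.cfc_congr_eigenvalues fun i =>
        (Lagrange.eval_interpolate_at_node (v := id) f (Set.injOn_id _) (hmem i)).symm
    rw [hA.cfc_polynomial_eval, ← lanczos_polynomial_exact hVorth hVspan hpdeg, hfm, hTp,
      Matrix.toLpLin_mul_same, Matrix.toLpLin_mul_same]
    rfl
  have hlpos : ∀ i, 0 < hA.eigenvalues i := hApd.eigenvalues_pos
  have hlmin_pos : 0 < lmin := by
    obtain ⟨i, rfl⟩ := hlmin_mem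
    exact hlpos i
  have hlmin_le : lmin ≤ lmax := by
    obtain ⟨i, rfl⟩ := hlmin_mem
    exact hlmax i
  set w := Matrix.toEuclideanLin (hA.cfc (Lagrange.nodal s id).eval) b with hw
  have hVw : Matrix.toEuclideanLin Vᴴ w = 0 := by
    have hTnodal : Polynomial.aeval T (Lagrange.nodal s id) = 0 := by
      rw [← hT.cfc_polynomial_eval, hT.cfc_congr_eigenvalues (g := (0 : Polynomial ℝ).eval)
        fun i => by simpa using Lagrange.eval_nodal_at_node (v := id) (hmem i),
        hT.cfc_polynomial_eval, map_zero]
    rw [hw, hA.cfc_polynomial_eval, ← LinearMap.comp_apply, ← Matrix.toLpLin_mul_same,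
      conjTranspose_polynomial_apply hVorth hVspan
        (Lagrange.degree_nodal.trans_le (by exact_mod_cast hcard)), ← hTdef, hTnodal]
    simp
  have horth : inner ℂ w (fm - x) = 0 := by
    have hmemV : fm - x ∈ LinearMap.range (Matrix.toEuclideanLin V) :=
      Submodule.sub_mem _ (hfm ▸ LinearMap.mem_range_self _ _) (hVspan ▸ hx)
    obtain ⟨u, hu⟩ := hmemV
    rw [← hu, ← LinearMap.adjoint_inner_left, ← Matrix.toEuclideanLin_conjTranspose_eq_adjoint,
      hVw, inner_zero_left]
  set h : ℝ → ℝ := fun z => ∫ t in Set.Ici (0 : ℝ), interpErrorKernel s z t ∂μ with hh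
  have hh0 : ∀ z, 0 < z → 0 ≤ h z := fun z hz =>
    setIntegral_nonneg measurableSet_Ici fun t ht => interpErrorKernel_nonneg hs hz ht
  have herr : Matrix.toEuclideanLin (hA.cfc f) b - fm =
      (-(-1) ^ s.card : ℂ) • Matrix.toEuclideanLin (hA.cfc h) w := by
    apply hA.eigenvectorBasis.repr.injective
    ext i
    have := congrArg (fun r : ℝ => (r : ℂ))
      (stieltjes_sub_eval_interpolate hμ hgμ hf hne hs (hlpos i))
    simp only [hfmA, hw, map_sub, map_smul, PiLp.sub_apply, PiLp.smul_apply,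
      hA.eigenvectorBasis_repr_cfc, smul_eq_mul]
    push_cast at this
    linear_combination (hA.eigenvectorBasis.repr b).ofLp i * this
  have hsign : ‖(-(-1) ^ s.card : ℂ)‖ = 1 := by simp
  have hκ : 0 ≤ lmax / lmin := div_nonneg (hlmin_pos.le.trans hlmin_le) hlmin_pos.le
  have hmain : ‖Matrix.toEuclideanLin (hA.cfc f) b - fm‖ ≤
      lmax / lmin * ‖(Matrix.toEuclideanLin (hA.cfc f) b - fm) + (fm - x)‖ := by
    refine norm_le_mul_norm_add_of_inner_eq_zero (α := h lmax) (β := h lmin) hκ ?_ horth ?_ ?_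
    · rw [div_mul_eq_mul_div, le_div_iff₀ hlmin_pos, mul_comm]
      exact mul_integral_interpErrorKernel_le hμ hne hs hlmin_pos hlmin_le
    · rw [herr, inner_smul_right, norm_mul, hsign, one_mul]
      exact (hA.le_re_inner_cfc_apply (fun i =>
        integral_interpErrorKernel_anti hμ hne hs (hlpos i) (hlmax i)) w).trans
          (Complex.re_le_norm _)
    · rw [herr, norm_smul, hsign, one_mul]
      refine hA.norm_cfc_apply_le (hh0 _ hlmin_pos) (fun i => ?_) w
      rw [abs_of_nonneg (hh0 _ (hlpos i))]
      exact integral_interpErrorKernel_anti hμ hne hs hlmin_pos (hlmin i)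
  rw [sub_add_sub_cancel] at hmain
  refine hmain.trans (mul_le_mul_of_nonneg_right ?_ (norm_nonneg _))
  nlinarith [sq_nonneg (lmax / lmin - 1)]
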